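/- arXiv:1905.02325 — 4 statements merged into one kernel-verified Lean document; each statement's English description precedes it below -/
import Mathlib

section
/- Let P be a univariate real polynomial (viewed as a function ℝ → ℝ). Then P is nondecreasing on all of ℝ if and only if there exist a constant c ∈ ℝ and real polynomials p₁, p₂ such that for every z ∈ ℝ, P(z) = c + ∫₀^z (p₁(u)² + p₂(u)²) du. In particular, in the representation of a nondecreasing polynomial as c plus the integral from 0 of a sum of squares of polynomials, the number of squares can always be chosen to be at most 2. -/
open MeasureTheory intervalIntegral

theorem nonneg_poly_sos_aux (n : ℕ) : ∀ Q : Polynomial ℝ, Q.natDegree ≤ n →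
    (∀ x, 0 ≤ Q.eval x) → ∃ a b : Polynomial ℝ, Q = a ^ 2 + b ^ 2 := by
  induction n using Nat.strong_induction_on with
  | _ n ih =>
  intro Q hn hQ
  by_cases hd : Q.natDegree = 0
  · obtain ⟨c, rfl⟩ := Polynomial.natDegree_eq_zero.mp hd
    have hc : 0 ≤ c := by simpa using hQ 0
    refine ⟨Polynomial.C (Real.sqrt c), 0, ?_⟩
    rw [← Polynomial.C_pow, Real.sq_sqrt hc]
    simp
  have hQ0 : Q ≠ 0 := by
    rintro rfl
    simp at hd
  obtain ⟨z, hz⟩ : ∃ z : ℂ, Polynomial.aeval z Q = 0 := by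
    apply IsAlgClosed.exists_aeval_eq_zero
    exact fun h => hd (Polynomial.natDegree_eq_of_degree_eq_some h)
  have key : ∃ T : Polynomial ℝ,
      Q = ((Polynomial.X - Polynomial.C z.re) ^ 2 + (Polynomial.C z.im) ^ 2) * T := by
    by_cases him : z.im = 0
    · have hzr : z = ((z.re : ℝ) : ℂ) := by
        apply Complex.ext <;> simp [him]
      generalize z.re = r at *
      subst hzr
      have hr : Q.eval r = 0 := by
        have h1 := Polynomial.aeval_algebraMap_apply ℂ r Q
        rw [Complex.coe_algebraMap, hz] at h1
        simpa using h1.symm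
      obtain ⟨S, hS⟩ := Polynomial.dvd_iff_isRoot.mpr hr
      have hmin : IsLocalMin (fun x => Q.eval x) r :=
        Filter.Eventually.of_forall fun x => by
          show Q.eval r ≤ Q.eval x
          rw [hr]; exact hQ x
      have hder := hmin.deriv_eq_zero
      rw [Polynomial.deriv] at hder
      have hSr : S.eval r = 0 := by
        rw [hS] at hder
        simpa [Polynomial.derivative_mul] using hder
      obtain ⟨T, hT⟩ := Polynomial.dvd_iff_isRoot.mpr hSr
      refine ⟨T, ?_⟩
      rw [hS, hT, him]
      simp only [Polynomial.C_0]
      ring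
    · obtain ⟨T, hT⟩ := Q.quadratic_dvd_of_aeval_eq_zero_im_ne_zero hz him
      refine ⟨T, ?_⟩
      rw [hT]
      congr 1
      have : ‖z‖ ^ 2 = z.re ^ 2 + z.im ^ 2 := by
        rw [← Complex.normSq_eq_norm_sq, Complex.normSq_apply]; ring
      rw [this]
      simp only [Polynomial.C_add, Polynomial.C_mul, Polynomial.C_pow]
      have h2 : (Polynomial.C (2 : ℝ)) = 2 := rfl
      rw [h2]
      ring
  obtain ⟨T, hT⟩ := key
  have hT0 : T ≠ 0 := by
    rintro rfl
    exact hQ0 (by simpa using hT)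
  set q : Polynomial ℝ := (Polynomial.X - Polynomial.C z.re) ^ 2 + (Polynomial.C z.im) ^ 2 with hq
  have hqd : q.natDegree = 2 := by
    rw [hq]; compute_degree!
  have hq0 : q ≠ 0 := by
    intro h
    rw [h] at hqd
    simp at hqd
  have hdeg : Q.natDegree = 2 + T.natDegree := by
    rw [hT, Polynomial.natDegree_mul hq0 hT0, hqd]
  have hTne : ∀ x, x ≠ z.re → 0 ≤ T.eval x := by
    intro x hx
    have h1 := hQ x
    rw [hT, Polynomial.eval_mul] at h1
    have h2 : 0 < q.eval x := by
      have : 0 < (x - z.re) ^ 2 := by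
        have := sub_ne_zero.mpr hx
        positivity
      simp only [hq, Polynomial.eval_add, Polynomial.eval_pow, Polynomial.eval_sub,
        Polynomial.eval_X, Polynomial.eval_C]
      positivity
    exact nonneg_of_mul_nonneg_right h1 h2
  have hTnn : ∀ x, 0 ≤ T.eval x := by
    have hcl : IsClosed {x : ℝ | 0 ≤ T.eval x} := isClosed_le continuous_const T.continuous
    have hde : Dense ({z.re}ᶜ : Set ℝ) := dense_compl_singleton z.re
    intro x
    exact hcl.closure_subset_iff.mpr (fun y hy => hTne y hy) (hde x)
  obtain ⟨a, b, hab⟩ := ih T.natDegree (by omega) T le_rfl hTnn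
  refine ⟨(Polynomial.X - Polynomial.C z.re) * a - Polynomial.C z.im * b,
    (Polynomial.X - Polynomial.C z.re) * b + Polynomial.C z.im * a, ?_⟩
  rw [hT, hq, hab]
  ring

theorem monotone_polynomial_iff_sos_integral (P : Polynomial ℝ) :
    Monotone (fun x : ℝ => P.eval x) ↔
      ∃ (c : ℝ) (p₁ p₂ : Polynomial ℝ), ∀ z : ℝ,
        P.eval z = c + ∫ u in (0:ℝ)..z, ((p₁.eval u) ^ 2 + (p₂.eval u) ^ 2) := by
  constructor
  · intro hm
    have hnn : ∀ x, 0 ≤ P.derivative.eval x := by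
      intro x
      rw [← Polynomial.deriv]
      exact hm.deriv_nonneg
    obtain ⟨a, b, hab⟩ := nonneg_poly_sos_aux _ P.derivative le_rfl hnn
    refine ⟨P.eval 0, a, b, fun z => ?_⟩
    have h := integral_eq_sub_of_hasDerivAt (a := 0) (b := z)
      (f := fun x => P.eval x) (f' := fun x => P.derivative.eval x)
      (fun x _ => P.hasDerivAt x) (P.derivative.continuous.intervalIntegrable _ _)
    simp only [hab, Polynomial.eval_add, Polynomial.eval_pow] at h
    rw [h]; ring
  · rintro ⟨c, p, q, h⟩ x y hxy
    have hc : Continuous fun u : ℝ => (p.eval u) ^ 2 + (q.eval u) ^ 2 :=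
      (p.continuous.pow 2).add (q.continuous.pow 2)
    have h1 := integral_add_adjacent_intervals (μ := volume)
      (hc.intervalIntegrable 0 x) (hc.intervalIntegrable x y)
    have h2 : 0 ≤ ∫ u in x..y, ((p.eval u) ^ 2 + (q.eval u) ^ 2) :=
      integral_nonneg hxy fun u _ => by positivity
    show P.eval x ≤ P.eval y
    rw [h x, h y]
    linarith
end

section
/- If a univariate real polynomial Q satisfies Q(u) ≥ 0 for all u ∈ ℝ, then there exist real polynomials p₁ and p₂ such that Q = p₁² + p₂², i.e., every real polynomial that is nonnegative on the whole real line is a sum of two squares of real polynomials. -/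
open Polynomial in
theorem sos_aux (n : ℕ) : ∀ Q : Polynomial ℝ, Q.natDegree = n → (∀ u : ℝ, 0 ≤ Q.eval u) →
    ∃ p₁ p₂ : Polynomial ℝ, Q = p₁ ^ 2 + p₂ ^ 2 := by
  induction n using Nat.strong_induction_on with
  | _ n ih =>
  intro Q hn hQ
  by_cases h0 : Q.natDegree = 0
  · obtain ⟨c, rfl⟩ := natDegree_eq_zero.1 h0
    have hc : 0 ≤ c := by simpa using hQ 0
    refine ⟨C (Real.sqrt c), 0, ?_⟩
    rw [← C_pow, Real.sq_sqrt hc]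
    simp
  have hQ0 : Q ≠ 0 := by
    rintro rfl
    simp at h0
  -- a monic quadratic factor
  obtain ⟨a, b, R, hR, hRn⟩ : ∃ a b : ℝ, ∃ R : ℝ[X],
      Q = ((X - C a) ^ 2 + C b ^ 2) * R ∧ ∀ u, 0 ≤ R.eval u := by
    obtain ⟨z, hz⟩ := IsAlgClosed.exists_aeval_eq_zero ℂ Q (by
      intro h
      exact h0 (natDegree_eq_of_degree_eq_some h))
    by_cases him : z.im = 0
    · have hroot : Q.eval z.re = 0 := by
        have hzr : z = (algebraMap ℝ ℂ z.re) := by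
          apply Complex.ext <;> simp [him]
        rw [hzr, aeval_algebraMap_apply] at hz
        simpa using hz
      obtain ⟨R, hR⟩ := dvd_iff_isRoot.2 hroot
      have hd : Q.derivative.eval z.re = 0 := by
        have hmin : IsLocalMin (fun x => Q.eval x) z.re :=
          Filter.Eventually.of_forall fun x => by simpa [hroot] using hQ x
        simpa using hmin.deriv_eq_zero
      have hRr : R.eval z.re = 0 := by
        rw [hR] at hd
        simpa using hd
      obtain ⟨S, hS⟩ := dvd_iff_isRoot.2 hRr
      refine ⟨z.re, 0, S, by rw [hR, hS]; simp; ring, ?_⟩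
      have hcl : IsClosed {u : ℝ | 0 ≤ S.eval u} :=
        isClosed_le continuous_const S.continuous
      have hsub : ({z.re}ᶜ : Set ℝ) ⊆ {u : ℝ | 0 ≤ S.eval u} := by
        intro u hu
        have hu' : u - z.re ≠ 0 := sub_ne_zero.2 hu
        have h1 := hQ u
        rw [hR, hS] at h1
        simp only [eval_mul, eval_sub, eval_X, eval_C, ← mul_assoc] at h1
        exact nonneg_of_mul_nonneg_right h1 (mul_self_pos.2 hu')
      intro u
      exact hcl.closure_subset_iff.2 hsub ((dense_compl_singleton z.re) u)
    · obtain ⟨R, hR⟩ := Q.quadratic_dvd_of_aeval_eq_zero_im_ne_zero hz him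
      have hq : (X ^ 2 - C (2 * z.re) * X + C (‖z‖ ^ 2) : ℝ[X]) =
          (X - C z.re) ^ 2 + C z.im ^ 2 := by
        rw [Complex.sq_norm, Complex.normSq_apply]
        simp only [C_mul, C_add, C_ofNat]
        ring
      rw [hq] at hR
      refine ⟨z.re, z.im, R, hR, fun u => ?_⟩
      have h1 := hQ u
      rw [hR] at h1
      simp only [eval_mul, eval_add, eval_pow, eval_sub, eval_X, eval_C] at h1
      exact nonneg_of_mul_nonneg_right h1 (by positivity)
  have hR0 : R ≠ 0 := by
    rintro rfl
    simp at hR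
    exact hQ0 hR
  have hdeg : ((X - C a) ^ 2 + C b ^ 2 : ℝ[X]).natDegree = 2 := by
    compute_degree!
  have hlt : R.natDegree < n := by
    have hq0 : ((X - C a) ^ 2 + C b ^ 2 : ℝ[X]) ≠ 0 := by
      intro h
      simp [h] at hdeg
    rw [← hn, hR, natDegree_mul hq0 hR0, hdeg]
    omega
  obtain ⟨p, q, hpq⟩ := ih _ hlt R rfl hRn
  refine ⟨(X - C a) * p - C b * q, (X - C a) * q + C b * p, ?_⟩
  rw [hR, hpq]
  ring

theorem nonneg_polynomial_eq_sum_two_squares (Q : Polynomial ℝ)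
    (hQ : ∀ u : ℝ, 0 ≤ Q.eval u) :
    ∃ p₁ p₂ : Polynomial ℝ, Q = p₁ ^ 2 + p₂ ^ 2 := by
  exact sos_aux _ Q rfl hQ
end

section
/- For every continuous nondecreasing function f : ℝ → ℝ, every compact set K ⊆ ℝ, and every ε > 0, there exists a real polynomial p that is nondecreasing on all of ℝ such that |f(x) − p(x)| ≤ ε for all x ∈ K. That is, the set of nondecreasing polynomials is dense in the cone of nondecreasing continuous functions ℝ → ℝ with respect to the topology of compact convergence (uniform convergence on compact sets). -/
theorem aux_antideriv (q : Polynomial ℝ) : ∃ P : Polynomial ℝ, Polynomial.derivative P = q := by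
  induction q using Polynomial.induction_on' with
  | add p q hp hq =>
    obtain ⟨P, hP⟩ := hp
    obtain ⟨Q, hQ⟩ := hq
    exact ⟨P + Q, by simp [hP, hQ]⟩
  | monomial n a =>
    refine ⟨Polynomial.monomial (n+1) (a / (n+1)), ?_⟩
    rw [Polynomial.derivative_monomial]
    congr 1
    have : (n:ℝ) + 1 ≠ 0 := by positivity
    push_cast
    field_simp

theorem monotone_polynomials_dense_in_monotone_continuous
    (f : ℝ → ℝ) (hf_cont : Continuous f) (hf_mono : Monotone f)
    (K : Set ℝ) (hK : IsCompact K) (ε : ℝ) (hε : 0 < ε) :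
    ∃ p : Polynomial ℝ, Monotone (fun x : ℝ => p.eval x) ∧
      ∀ x ∈ K, |f x - p.eval x| ≤ ε := by
  obtain ⟨R, hR0, hKR⟩ : ∃ R : ℝ, 0 < R ∧ K ⊆ Set.Icc (-R) R := by
    obtain ⟨R, hR0, hR⟩ := hK.isBounded.exists_pos_norm_le
    exact ⟨R, hR0, fun x hx => abs_le.mp (hR x hx)⟩
  -- step size
  obtain ⟨h, hh0, hh⟩ : ∃ h : ℝ, 0 < h ∧ ∀ x ∈ Set.Icc (-R) R, f (x + h) ≤ f x + ε / 2 := by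
    have hu := (isCompact_Icc (a := -R) (b := R + 1)).uniformContinuousOn_of_continuous
      hf_cont.continuousOn
    rw [Metric.uniformContinuousOn_iff] at hu
    obtain ⟨δ, hδ, H⟩ := hu (ε / 2) (by positivity)
    have h1 : 0 < min (δ / 2) 1 := by positivity
    have h2 := min_le_left (δ / 2) 1
    have h3 := min_le_right (δ / 2) 1
    refine ⟨min (δ / 2) 1, h1, fun x hx => ?_⟩
    have := H (x + min (δ / 2) 1) ⟨by linarith [hx.1], by linarith [hx.2]⟩ x
      ⟨hx.1, by linarith [hx.2]⟩ (by
        rw [Real.dist_eq, add_sub_cancel_left, abs_of_pos h1]; linarith)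
    rw [Real.dist_eq, abs_lt] at this
    linarith [this.2]
  have hF : ∀ x, HasDerivAt (fun y => ∫ t in (0:ℝ)..y, f t) (f x) x := fun x =>
    hf_cont.integral_hasStrictDerivAt 0 x |>.hasDerivAt
  set F : ℝ → ℝ := fun y => ∫ t in (0:ℝ)..y, f t with hFdef
  clear_value F
  have hG : ∀ x, HasDerivAt (fun y => (F (y + h) - F y) / h) ((f (x + h) - f x) / h) x :=
    fun x => (((hF (x + h)).comp_add_const x h).sub (hF x)).div_const h
  set G : ℝ → ℝ := fun y => (F (y + h) - F y) / h with hGdef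
  have hGf : ∀ x ∈ Set.Icc (-R) R, |f x - G x| ≤ ε / 2 := by
    intro x hx
    obtain ⟨c, hc, hce⟩ := exists_hasDerivAt_eq_slope F f (a := x) (b := x + h) (by linarith)
      (fun y _ => (hF y).continuousAt.continuousWithinAt) (fun y _ => hF y)
    have hGc : G x = f c := by rw [hce, hGdef]; simp
    rw [hGc, abs_le]
    have h1 := hf_mono hc.1.le
    have h2 := hf_mono hc.2.le
    have h3 := hh x hx
    constructor <;> linarith
  set s : ℝ → ℝ := fun x => Real.sqrt ((f (x + h) - f x) / h) with hs
  have hsc : Continuous s := by fun_prop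
  have hs2 : ∀ x, s x ^ 2 = (f (x + h) - f x) / h := fun x =>
    Real.sq_sqrt (div_nonneg (sub_nonneg.mpr (hf_mono (by linarith))) hh0.le)
  obtain ⟨M, hM⟩ := (isCompact_Icc (a := -R) (b := R)).exists_bound_of_continuousOn
    hsc.continuousOn
  have hM0 : 0 ≤ M := (norm_nonneg _).trans (hM 0 ⟨by linarith, hR0.le⟩)
  set η : ℝ := ε / (4 * R) with hη
  have hη0 : 0 < η := by positivity
  set δ : ℝ := min 1 (η / (2 * M + 1)) with hδ
  have hδ0 : 0 < δ := by positivity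
  obtain ⟨q, hq⟩ := exists_polynomial_near_of_continuousOn (-R) R s hsc.continuousOn δ hδ0
  obtain ⟨P, hP⟩ := aux_antideriv (q ^ 2)
  have hqs : ∀ x ∈ Set.Icc (-R) R, |q.eval x ^ 2 - s x ^ 2| ≤ η := by
    intro x hx
    have h1 := (hq x hx).le
    have h2 := hM x hx
    rw [Real.norm_eq_abs] at h2
    have h3 : |q.eval x + s x| ≤ 2 * M + 1 := by
      have : q.eval x + s x = (q.eval x - s x) + (s x + s x) := by ring
      rw [this]
      have a1 := abs_add_le (q.eval x - s x) (s x + s x)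
      have a2 := abs_add_le (s x) (s x)
      have a3 := min_le_left 1 (η / (2 * M + 1))
      linarith
    calc |q.eval x ^ 2 - s x ^ 2| = |q.eval x - s x| * |q.eval x + s x| := by
          rw [← abs_mul]; ring_nf
      _ ≤ (η / (2 * M + 1)) * (2 * M + 1) := by
          gcongr
          exact h1.trans (min_le_right _ _)
      _ = η := by field_simp
  have hPd : ∀ x, HasDerivAt (fun y => P.eval y) (q.eval x ^ 2) x := fun x => by
    have := P.hasDerivAt x
    rwa [hP, Polynomial.eval_pow] at this
  refine ⟨P + Polynomial.C (G (-R) - P.eval (-R)), ?_, ?_⟩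
  · have : Monotone fun y => P.eval y :=
      monotone_of_hasDerivAt_nonneg hPd (fun x => sq_nonneg _)
    intro x y hxy
    simpa using this hxy
  · intro x hx
    have hx := hKR hx
    have hmv := (convex_Icc (-R) R).norm_image_sub_le_of_norm_hasDerivWithin_le
      (f := fun y => P.eval y - G y) (C := η)
      (fun y _ => ((hPd y).sub (hG y)).hasDerivWithinAt)
      (fun y hy => by rw [← hs2, Real.norm_eq_abs]; exact hqs y hy)
      (Set.left_mem_Icc.mpr (by linarith)) hx
    rw [Real.norm_eq_abs, Real.norm_eq_abs] at hmv
    have h1 : |x - -R| ≤ 2 * R := by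
      rw [abs_le]; constructor <;> linarith [hx.1, hx.2]
    have h2 : η * |x - -R| ≤ ε / 2 := by
      calc η * |x - -R| ≤ η * (2 * R) := by gcongr
        _ = ε / 2 := by rw [hη]; field_simp; norm_num
    have h3 := hGf x hx
    have h4 := abs_le.mp (hmv.trans h2)
    rw [abs_le] at h3 ⊢
    simp only [Polynomial.eval_add, Polynomial.eval_C]
    constructor <;> linarith [h4.1, h4.2, h3.1, h3.2]
end

section
/- Let p and q be probability density functions on ℝ^d with respect to Lebesgue measure, with corresponding probability measures μ and ν. If T₁ and T₂ are two increasing triangular maps ℝ^d → ℝ^d each pushing μ forward to ν, then T₁ = T₂ μ-almost everywhere. -/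
open MeasureTheory

/-- A map `T : ℝ^d → ℝ^d` is triangular if its `j`-th component depends only on
the first `j` coordinates `x 0, …, x j`. -/
def IsTriangularMap {d : ℕ} (T : (Fin d → ℝ) → Fin d → ℝ) : Prop :=
  ∀ (j : Fin d) (x y : Fin d → ℝ), (∀ i, i ≤ j → x i = y i) → T x j = T y j

/-- A triangular map is increasing if each component is nondecreasing in its last
relevant coordinate, the previous coordinates being fixed. -/
def IsIncreasingTriangular {d : ℕ} (T : (Fin d → ℝ) → Fin d → ℝ) : Prop :=
  ∀ (j : Fin d) (x y : Fin d → ℝ), (∀ i, i < j → x i = y i) → x j ≤ y j → T x j ≤ T y j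

lemma itp_null_fibre {d : ℕ} (j : Fin d) (N : Set (Fin d → ℝ)) (hN : MeasurableSet N)
    (h : ∀ x s t, Function.update x j s ∈ N → Function.update x j t ∈ N → s = t) :
    (volume : Measure (Fin d → ℝ)) N = 0 := by
  classical
  rw [← lintegral_indicator_one hN, volume_pi,
    lintegral_eq_lmarginal_univ (μ := fun _ : Fin d => (volume : Measure ℝ)) (fun _ => 0),
    lmarginal_erase' _
      (measurable_one.indicator hN) (Finset.mem_univ j)]
  have : (fun x : Fin d → ℝ => ∫⁻ t, N.indicator (1 : (Fin d → ℝ) → ENNReal)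
      (Function.update x j t) ∂(volume : Measure ℝ)) = fun _ => 0 := by
    funext x
    have hm : MeasurableSet ((fun t => Function.update x j t) ⁻¹' N) :=
      (measurable_update x) hN
    have h0 : (volume : Measure ℝ) ((fun t => Function.update x j t) ⁻¹' N) = 0 :=
      Set.Subsingleton.measure_zero (fun s hs t ht => h x s t hs ht) _
    rw [← h0, ← lintegral_indicator_one hm]
    rfl
  rw [this]
  simp [lmarginal]

/-- Left inverse, coordinate by coordinate. -/
lemma itp_leftinv {d : ℕ} (μ ν : Measure (Fin d → ℝ)) (hν : ν ≪ volume)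
    (T : (Fin d → ℝ) → Fin d → ℝ) (hm : Measurable T)
    (ht : IsTriangularMap T) (hi : IsIncreasingTriangular T)
    (h : Measure.map T μ = ν) (i : Fin d) :
    ∃ ψ : (Fin d → ℝ) → ℝ, Measurable ψ ∧
      (∀ y y', (∀ k, k ≤ i → y k = y' k) → ψ y = ψ y') ∧
      ∀ᵐ x ∂μ, ψ (T x) = x i := by
  classical
  induction i using WellFoundedLT.induction with
  | ind i ih =>
  choose ψ hψm hψd hψ using ih
  let Φ : ℝ → (Fin d → ℝ) → Fin d → ℝ := fun r y k => if hk : k < i then ψ k hk y else r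
  have hΦm : ∀ r, Measurable (Φ r) := by
    intro r
    refine measurable_pi_lambda _ fun k => ?_
    by_cases hk : k < i
    · simpa [Φ, hk] using hψm k hk
    · simp [Φ, hk]
  let g : ℝ → (Fin d → ℝ) → ℝ := fun r y => T (Φ r y) i
  have hgm : ∀ r, Measurable (g r) := fun r => (measurable_pi_apply i).comp (hm.comp (hΦm r))
  have hgd : ∀ r y y', (∀ k, k < i → y k = y' k) → g r y = g r y' := by
    intro r y y' hy
    have : Φ r y = Φ r y' := by
      funext k
      by_cases hk : k < i
      · simp only [Φ, hk, dif_pos]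
        exact hψd k hk _ _ fun l hl => hy l (lt_of_le_of_lt hl hk)
      · simp [Φ, hk]
    simp only [g, this]
  have hgν : ∀ r, ∀ᵐ x ∂μ, T x i ≠ g r (T x) := by
    intro r
    have hN : MeasurableSet {y : Fin d → ℝ | y i = g r y} :=
      measurableSet_eq_fun (measurable_pi_apply i) (hgm r)
    have h0 : ν {y : Fin d → ℝ | y i = g r y} = 0 := by
      apply hν
      apply itp_null_fibre i _ hN
      intro x s t hs ht'
      simp only [Set.mem_ofPred_eq, Function.update_self] at hs ht'
      rw [hs, ht']
      apply hgd
      intro k hk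
      simp [Function.update_of_ne hk.ne]
    rw [← h, Measure.map_apply hm hN] at h0
    rw [ae_iff]
    simpa using h0
  let e : (Fin d → ℝ) → EReal := fun y => ⨆ r : ℚ, if g (r : ℝ) y < y i then ((r : ℝ) : EReal) else ⊥
  refine ⟨fun y => (e y).toReal, ?_, ?_, ?_⟩
  · refine measurable_ereal_toReal.comp (Measurable.iSup fun r => ?_)
    exact Measurable.ite (measurableSet_lt (hgm _) (measurable_pi_apply i))
      measurable_const measurable_const
  · intro y y' hy
    have : e y = e y' := by
      simp only [e]
      refine iSup_congr fun r => ?_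
      rw [hgd r y y' fun k hk => hy k hk.le, hy i le_rfl]
    simp only [this]
  · have h1 : ∀ᵐ x ∂μ, ∀ r : ℚ, T x i ≠ g r (T x) := ae_all_iff.2 fun r => hgν r
    have h2 : ∀ᵐ x ∂μ, ∀ k (hk : k < i), ψ k hk (T x) = x k := by
      rw [ae_all_iff]; intro k
      by_cases hk : k < i
      · filter_upwards [hψ k hk] with x hx _ using hx
      · exact Filter.Eventually.of_forall fun x hk' => absurd hk' hk
    filter_upwards [h1, h2] with x hx1 hx2
    have key : ∀ r : ℚ, g r (T x) < T x i ↔ (r : ℝ) < x i := by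
      intro r
      have hpre : ∀ k, k < i → Φ r (T x) k = x k := by
        intro k hk
        simp [Φ, hk, hx2]
      have hii : Φ r (T x) i = r := by simp [Φ]
      constructor
      · intro hlt
        by_contra hle
        push Not at hle
        have := hi i x (Φ r (T x)) (fun k hk => (hpre k hk).symm) (by rw [hii]; exact hle)
        exact absurd hlt (not_lt.2 this)
      · intro hlt
        have := hi i (Φ r (T x)) x hpre (by rw [hii]; exact hlt.le)
        exact lt_of_le_of_ne this (hx1 r).symm
    have : e (T x) = ((x i : ℝ) : EReal) := by
      apply le_antisymm
      · refine iSup_le fun r => ?_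
        split_ifs with hr
        · exact_mod_cast ((key r).1 hr).le
        · exact bot_le
      · refine le_of_forall_lt fun c hc => ?_
        obtain ⟨q, hq1, hq2⟩ := EReal.lt_iff_exists_rat_btwn.1 hc
        have hq2' : (q : ℝ) < x i := by exact_mod_cast hq2
        refine lt_of_lt_of_le hq1 ?_
        refine le_trans ?_ (le_iSup _ q)
        rw [if_pos ((key q).2 hq2')]
    simp [this]

lemma itp_le {d : ℕ} (j : Fin d) (μ : Measure (Fin d → ℝ)) [IsFiniteMeasure μ]
    (hμ : μ ≪ volume) (f g : (Fin d → ℝ) → ℝ) (hf : Measurable f) (hg : Measurable g)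
    (hfd : ∀ x y, (∀ i, i ≤ j → x i = y i) → f x = f y)
    (hgd : ∀ x y, (∀ i, i ≤ j → x i = y i) → g x = g y)
    (hfi : ∀ x y, (∀ i, i < j → x i = y i) → x j ≤ y j → f x ≤ f y)
    (hgi : ∀ x y, (∀ i, i < j → x i = y i) → x j ≤ y j → g x ≤ g y)
    (hA : ∀ (A : Set (Fin d → ℝ)), MeasurableSet A →
      (∀ x y, (∀ i, i < j → x i = y i) → (x ∈ A ↔ y ∈ A)) → ∀ a : ℝ,
      μ (A ∩ {x | f x ≤ a}) = μ (A ∩ {x | g x ≤ a})) :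
    ∀ᵐ x ∂μ, f x ≤ g x := by
  classical
  have hu : ∀ r : ℝ, Measurable fun x : Fin d → ℝ => Function.update x j r := fun r => by
    fun_prop
  have main : ∀ a : ℚ, ∀ᵐ x ∂μ, ¬ (g x ≤ a ∧ (a : ℝ) < f x) := by
    intro a
    have hD : MeasurableSet {x | g x ≤ a ∧ (a : ℝ) < f x} :=
      (measurableSet_le hg measurable_const).inter (measurableSet_lt measurable_const hf)
    let A : ℚ → Set (Fin d → ℝ) := fun r =>
      (fun x => Function.update x j (r : ℝ)) ⁻¹' {x | g x ≤ a ∧ (a : ℝ) < f x}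
    have hAm : ∀ r, MeasurableSet (A r) := fun r => hu r hD
    have hmem : ∀ r x, x ∈ A r ↔ g (Function.update x j (r : ℝ)) ≤ a ∧
      (a : ℝ) < f (Function.update x j (r : ℝ)) := fun r x => Iff.rfl
    have h1 : ∀ r : ℚ, ∀ᵐ x ∂μ, ¬ (x ∈ A r ∧ (g x ≤ a ∧ (a : ℝ) < f x)) := by
      intro r
      have hinv : ∀ x y : Fin d → ℝ, (∀ i, i < j → x i = y i) → (x ∈ A r ↔ y ∈ A r) := by
        intro x y hxy
        have hh : ∀ i, i ≤ j → Function.update x j (r : ℝ) i = Function.update y j (r : ℝ) i := by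
          intro i hi
          rcases hi.lt_or_eq with h | h
          · simp [Function.update_of_ne h.ne, hxy i h]
          · subst h; simp
        rw [hmem, hmem, hfd _ _ hh, hgd _ _ hh]
      have heq := hA (A r) (hAm r) hinv a
      have hsub : A r ∩ {x | f x ≤ a} ⊆ A r ∩ {x | g x ≤ a} := by
        rintro x ⟨hx, hfx⟩
        refine ⟨hx, ?_⟩
        have hx' := (hmem r x).1 hx
        have hup : ∀ i, i < j → x i = Function.update x j (r : ℝ) i := fun i hi => by
          simp [Function.update_of_ne hi.ne]
        rcases le_total (x j) r with hle | hle
        · exact (hgi x _ hup (by simpa using hle)).trans hx'.1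
        · exfalso
          have := hfi _ x (fun i hi => (hup i hi).symm) (by simpa using hle)
          exact absurd (hx'.2.trans_le this) (not_lt.2 hfx)
      have h0 : μ ((A r ∩ {x | g x ≤ a}) \ (A r ∩ {x | f x ≤ a})) = 0 := by
        rw [measure_sdiff hsub ((hAm r).inter
          (measurableSet_le hf measurable_const)).nullMeasurableSet (measure_ne_top _ _), heq,
          tsub_self]
      rw [ae_iff]
      refine measure_mono_null ?_ h0
      intro x hx
      simp only [Set.mem_ofPred_eq, not_not] at hx
      exact ⟨⟨hx.1, hx.2.1⟩, fun hh => absurd hx.2.2 (not_lt.2 hh.2)⟩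
    have h2 : μ ({x | g x ≤ a ∧ (a : ℝ) < f x} ∩ (⋃ r, A r)ᶜ) = 0 := by
      apply hμ
      apply itp_null_fibre j _ (hD.inter (MeasurableSet.iUnion hAm).compl)
      have wlog' : ∀ x s t, Function.update x j s ∈ {x | g x ≤ a ∧ (a : ℝ) < f x} ∩ (⋃ r, A r)ᶜ →
          Function.update x j t ∈ {x | g x ≤ a ∧ (a : ℝ) < f x} ∩ (⋃ r, A r)ᶜ → ¬ s < t := by
        intro x s t hs ht hst
        obtain ⟨q, hq1, hq2⟩ := exists_rat_btwn hst
        apply hs.2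
        refine Set.mem_iUnion.2 ⟨q, (hmem q _).2 ?_⟩
        rw [Function.update_idem]
        have hpre : ∀ (u v : ℝ) (i : Fin d), i < j →
            Function.update x j u i = Function.update x j v i := fun u v i hi => by
          simp [Function.update_of_ne hi.ne]
        exact ⟨(hgi _ _ (hpre q t) (by simpa using hq2.le)).trans ht.1.1,
          hs.1.2.trans_le (hfi _ _ (hpre s q) (by simpa using hq1.le))⟩
      intro x s t hs ht
      exact le_antisymm (not_lt.1 (wlog' x t s ht hs)) (not_lt.1 (wlog' x s t hs ht))
    have h2' := measure_eq_zero_iff_ae_notMem.1 h2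
    filter_upwards [ae_all_iff.2 h1, h2'] with x hx1 hx2 hx
    apply hx2
    refine ⟨hx, fun hU => ?_⟩
    obtain ⟨r, hr⟩ := Set.mem_iUnion.1 hU
    exact hx1 r ⟨hr, hx⟩
  filter_upwards [ae_all_iff.2 main] with x hx
  by_contra hlt
  push Not at hlt
  obtain ⟨q, hq1, hq2⟩ := exists_rat_btwn hlt
  exact hx q ⟨hq1.le, hq2⟩

theorem increasing_triangular_pushforward_unique_ae {d : ℕ}
    (p q : (Fin d → ℝ) → ENNReal) (hp : Measurable p) (hq : Measurable q)
    (μ ν : Measure (Fin d → ℝ)) [IsProbabilityMeasure μ] [IsProbabilityMeasure ν]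
    (hμ : μ = volume.withDensity p) (hν : ν = volume.withDensity q)
    (T₁ T₂ : (Fin d → ℝ) → Fin d → ℝ)
    (h₁m : Measurable T₁) (h₂m : Measurable T₂)
    (h₁t : IsTriangularMap T₁) (h₂t : IsTriangularMap T₂)
    (h₁i : IsIncreasingTriangular T₁) (h₂i : IsIncreasingTriangular T₂)
    (h₁ : Measure.map T₁ μ = ν) (h₂ : Measure.map T₂ μ = ν) :
    T₁ =ᵐ[μ] T₂ := by
  classical
  have hμac : μ ≪ volume := hμ ▸ withDensity_absolutelyContinuous _ _
  have hνac : ν ≪ volume := hν ▸ withDensity_absolutelyContinuous _ _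
  choose ψ hψm hψd hψ using itp_leftinv μ ν hνac T₁ h₁m h₁t h₁i h₁
  have hall : ∀ j, ∀ᵐ x ∂μ, T₁ x j = T₂ x j := by
    intro j
    induction j using WellFoundedLT.induction with
    | ind j ih =>
    have hpre : ∀ᵐ x ∂μ, ∀ k, k < j → T₁ x k = T₂ x k := by
      rw [ae_all_iff]; intro k
      by_cases hk : k < j
      · filter_upwards [ih k hk] with x hx _ using hx
      · exact Filter.Eventually.of_forall fun x hk' => absurd hk' hk
    let Ψ : (Fin d → ℝ) → Fin d → ℝ := fun y k => ψ k y
    have hΨm : Measurable Ψ := measurable_pi_lambda _ hψm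
    have hA : ∀ (A : Set (Fin d → ℝ)), MeasurableSet A →
      (∀ x y, (∀ i, i < j → x i = y i) → (x ∈ A ↔ y ∈ A)) → ∀ a : ℝ,
      μ (A ∩ {x | T₁ x j ≤ a}) = μ (A ∩ {x | T₂ x j ≤ a}) := by
      intro A hAm hAd a
      have hB : MeasurableSet (Ψ ⁻¹' A ∩ {y | y j ≤ a}) :=
        (hΨm hAm).inter (measurableSet_le (measurable_pi_apply j) measurable_const)
      have e1 : μ (A ∩ {x | T₁ x j ≤ a}) = μ (T₁ ⁻¹' (Ψ ⁻¹' A ∩ {y | y j ≤ a})) := by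
        apply measure_congr
        rw [Filter.eventuallyEq_set]
        filter_upwards [ae_all_iff.2 hψ] with x hx
        have : x ∈ A ↔ Ψ (T₁ x) ∈ A := hAd _ _ fun i _ => (hx i).symm
        simp [this]
      have e2 : μ (A ∩ {x | T₂ x j ≤ a}) = μ (T₂ ⁻¹' (Ψ ⁻¹' A ∩ {y | y j ≤ a})) := by
        apply measure_congr
        rw [Filter.eventuallyEq_set]
        filter_upwards [ae_all_iff.2 hψ, hpre] with x hx hx2
        have : x ∈ A ↔ Ψ (T₂ x) ∈ A := hAd _ _ fun i hi => by
          rw [← hx i]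
          exact hψd i _ _ fun k hk => hx2 k (hk.trans_lt hi)
        simp [this]
      rw [e1, e2, ← Measure.map_apply h₁m hB, ← Measure.map_apply h₂m hB, h₁, h₂]
    have m1 : Measurable fun x => T₁ x j := (measurable_pi_apply j).comp h₁m
    have m2 : Measurable fun x => T₂ x j := (measurable_pi_apply j).comp h₂m
    have l1 := itp_le j μ hμac _ _ m1 m2 (h₁t j) (h₂t j) (h₁i j) (h₂i j) hA
    have l2 := itp_le j μ hμac _ _ m2 m1 (h₂t j) (h₁t j) (h₂i j) (h₁i j)
      fun A hAm hAd a => (hA A hAm hAd a).symm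
    filter_upwards [l1, l2] with x hx1 hx2 using le_antisymm hx1 hx2
  filter_upwards [ae_all_iff.2 hall] with x hx
  exact funext hx
end
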